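/- Kernelized MWU with the special non-uniform prior exactly simulates MWU over all binary row-stochastic matrices: fix d ≥ 2, η > 0, and sequences p_1,…,p_T ∈ Δ(d), ℓ_1,…,ℓ_T ∈ [0,1]^d. Let q_t ∈ Δ(Φ_b) be defined by q_t(φ) ∝ π(φ)·exp(−η Σ_{τ=1}^{t−1} ⟨φ, p_τ ℓ_τ^T⟩), and let B_t ∈ R^{d×d} be defined entrywise by (B_t)_{ij} = exp(−η Σ_{τ=1}^{t−1} p_{τ,i} ℓ_{τ,j}). Then for every t ∈ [T] and all i, j ∈ [d], (E_{φ∼q_t}[φ])_{ij} = 1 − K(B_t, 1 1^T − e_i e_j^T) / K(B_t, 1 1^T), where K(B,A) = Σ_{φ ∈ Φ_b} π(φ) Π_{u,v: φ_{uv}=1} B_{uv} A_{uv}. -/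

import Mathlib

open Finset

/-- The binary row-stochastic matrix associated with a map `f : [d] → [d]`. -/
def toMat (d : ℕ) (f : Fin d → Fin d) : Matrix (Fin d) (Fin d) ℝ :=
  fun i j => if f i = j then 1 else 0

/-- The set `Φ_b` of binary row-stochastic `d × d` matrices. -/
noncomputable def PhiB (d : ℕ) : Finset (Matrix (Fin d) (Fin d) ℝ) := by
  classical exact Finset.image (toMat d) Finset.univ

/-- A matrix is row-stochastic if every row lies in the simplex. -/
def RowStochastic {d : ℕ} (φ : Matrix (Fin d) (Fin d) ℝ) : Prop :=
  ∀ i, (∀ j, 0 ≤ φ i j) ∧ ∑ j, φ i j = 1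

/-- A vector lies in the probability simplex `Δ(d)`. -/
def InSimplex (d : ℕ) (p : Fin d → ℝ) : Prop :=
  (∀ i, 0 ≤ p i) ∧ ∑ i, p i = 1

/-- The `ψ`-induced weight of `φ`: `π_ψ(φ) = ∏ i ⟨ψ_{i:}, φ_{i:}⟩`. -/
noncomputable def piInd {d : ℕ} (ψ φ : Matrix (Fin d) (Fin d) ℝ) : ℝ :=
  ∏ i, ∑ j, ψ i j * φ i j

/-- `ψ^k = ((d-2)/(d-1))·1 e_k^T + (1/(d(d-1)))·1 1^T`. -/
noncomputable def psiK (d : ℕ) (k : Fin d) : Matrix (Fin d) (Fin d) ℝ :=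
  fun _ j => ((d : ℝ) - 2) / ((d : ℝ) - 1) * (if j = k then 1 else 0) + 1 / ((d : ℝ) * ((d : ℝ) - 1))

/-- `ψ^{d+1} = ((d-2)/(d-1))·I + (1/(d(d-1)))·1 1^T`. -/
noncomputable def psiSelf (d : ℕ) : Matrix (Fin d) (Fin d) ℝ :=
  fun i j => ((d : ℝ) - 2) / ((d : ℝ) - 1) * (if i = j then 1 else 0) + 1 / ((d : ℝ) * ((d : ℝ) - 1))

/-- The special prior `π = (1/(2d)) Σ_k π_{ψ^k} + (1/2) π_{ψ^{d+1}}`. -/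
noncomputable def priorPi (d : ℕ) (φ : Matrix (Fin d) (Fin d) ℝ) : ℝ :=
  1 / (2 * d) * ∑ k : Fin d, piInd (psiK d k) φ + 1 / 2 * piInd (psiSelf d) φ

/-- `d^self_φ`: the number of indices `i` whose row equals `e_i^T`. -/
noncomputable def dSelf {d : ℕ} (φ : Matrix (Fin d) (Fin d) ℝ) : ℕ :=
  Nat.card {i : Fin d // φ i = fun j => if j = i then (1 : ℝ) else 0}

/-- `d^unif_φ`: the maximum multiplicity in the multiset of rows of `φ`. -/
noncomputable def dUnif {d : ℕ} (φ : Matrix (Fin d) (Fin d) ℝ) : ℕ :=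
  Finset.univ.sup fun i : Fin d => Nat.card {j : Fin d // φ j = φ i}

/-- Complexity measure for binary row-stochastic matrices. -/
noncomputable def cB {d : ℕ} (φ : Matrix (Fin d) (Fin d) ℝ) : ℕ :=
  min (d - dSelf φ) (d - dUnif φ + 1)

/-- `Q_φ`: distributions over `Φ_b` (indexed by maps `f : [d] → [d]`) averaging to `φ`. -/
def QSet (d : ℕ) (φ : Matrix (Fin d) (Fin d) ℝ) : Set ((Fin d → Fin d) → ℝ) :=
  {q | (∀ f, 0 ≤ q f) ∧ (∑ f, q f = 1) ∧ ∀ i j, ∑ f, q f * toMat d f i j = φ i j}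

/-- Extended complexity measure `c_φ = inf_{q ∈ Q_φ} E_{φ'∼q}[c_{φ'}]`. -/
noncomputable def cGen (d : ℕ) (φ : Matrix (Fin d) (Fin d) ℝ) : ℝ :=
  sInf ((fun q => ∑ f : Fin d → Fin d, q f * (cB (toMat d f) : ℝ)) '' QSet d φ)

/-- Matrix inner product `⟨φ, p ℓ^T⟩`. -/
noncomputable def lossInner {d : ℕ} (φ : Matrix (Fin d) (Fin d) ℝ) (p ℓ : Fin d → ℝ) : ℝ :=
  ∑ i, ∑ j, φ i j * (p i * ℓ j)

/-- The mean matrix `E_{f∼q}[φ_f]` of a weight vector over binary matrices. -/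
noncomputable def mixMat (d : ℕ) (q : (Fin d → Fin d) → ℝ) : Matrix (Fin d) (Fin d) ℝ :=
  fun i j => ∑ f, q f * toMat d f i j

/-- KL divergence of `q` (a distribution over `Φ_b`, indexed by maps) from the prior `π`. -/
noncomputable def klPrior (d : ℕ) (q : (Fin d → Fin d) → ℝ) : ℝ :=
  ∑ f, q f * Real.log (q f / priorPi d (toMat d f))

/-- The kernel `K(B,A) = Σ_{φ∈Φ_b} π(φ) Π_{i,j : φ_{ij}=1} B_{ij} A_{ij}`. -/
noncomputable def kernelK (d : ℕ) (B A : Matrix (Fin d) (Fin d) ℝ) : ℝ := by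
  classical exact
    ∑ φ ∈ PhiB d, priorPi d φ * ∏ i, ∏ j, if φ i j = 1 then B i j * A i j else 1

/-!
A binary row-stochastic matrix is a map `f : [d] → [d]`, and the exponential of its cumulative loss
factors over the rows, so that `π(f) ∏ i, B i (f i)` is both the unnormalized weight of `f` under
`q_t` and its summand in `K(B_t, 1 1^T)`. Replacing `1 1^T` by `1 1^T − e_i e_j^T` annihilates
exactly the summands with `f i = j`, so the quotient of the two kernels is the probability that
`f i ≠ j`.
-/

theorem toMat_injective (d : ℕ) : Function.Injective (toMat d) := by
  intro f g h
  funext i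
  simpa [toMat] using congrFun (congrFun h i) (g i)

theorem sum_mul_toMat {d : ℕ} (f : Fin d → Fin d) (i : Fin d) (c : Fin d → ℝ) :
    ∑ j, c j * toMat d f i j = c (f i) := by
  simp [toMat]

theorem piInd_toMat {d : ℕ} (ψ : Matrix (Fin d) (Fin d) ℝ) (f : Fin d → Fin d) :
    piInd ψ (toMat d f) = ∏ i, ψ i (f i) :=
  prod_congr rfl fun i _ => sum_mul_toMat f i (ψ i)

theorem mul_ite_add_one_div_pos {x : ℝ} (hx : 2 ≤ x) (P : Prop) [Decidable P] :
    0 < (x - 2) / (x - 1) * (if P then 1 else 0) + 1 / (x * (x - 1)) := by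
  have hx₁ : 0 < x - 1 := by linarith
  have hx₂ : 0 ≤ x - 2 := sub_nonneg.mpr hx
  have hite : (0 : ℝ) ≤ if P then 1 else 0 := by split_ifs <;> norm_num
  exact add_pos_of_nonneg_of_pos (mul_nonneg (div_nonneg hx₂ hx₁.le) hite) (by positivity)

theorem psiK_pos {d : ℕ} (hd : 2 ≤ d) (k i j : Fin d) : 0 < psiK d k i j :=
  mul_ite_add_one_div_pos (by exact_mod_cast hd) (j = k)

theorem psiSelf_pos {d : ℕ} (hd : 2 ≤ d) (i j : Fin d) : 0 < psiSelf d i j :=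
  mul_ite_add_one_div_pos (by exact_mod_cast hd) (i = j)

theorem piInd_toMat_pos {d : ℕ} {ψ : Matrix (Fin d) (Fin d) ℝ} {f : Fin d → Fin d}
    (hψ : ∀ i, 0 < ψ i (f i)) : 0 < piInd ψ (toMat d f) :=
  piInd_toMat ψ f ▸ prod_pos fun i _ => hψ i

theorem priorPi_toMat_pos {d : ℕ} (hd : 2 ≤ d) (f : Fin d → Fin d) :
    0 < priorPi d (toMat d f) := by
  have hK : 0 ≤ ∑ k, piInd (psiK d k) (toMat d f) :=
    sum_nonneg fun k _ => (piInd_toMat_pos fun i => psiK_pos hd k i (f i)).le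
  have hSelf : 0 < piInd (psiSelf d) (toMat d f) :=
    piInd_toMat_pos fun i => psiSelf_pos hd i (f i)
  exact add_pos_of_nonneg_of_pos (mul_nonneg (by positivity) hK) (mul_pos one_half_pos hSelf)

/-- The summand `π(φ) ∏_{u,v : φ_{uv}=1} B_{uv}` of the kernel `K(B, 1 1^T)` at the binary matrix
`φ` of the map `f`. For `B = B_t` it is the unnormalized MWU weight of `φ`. -/
noncomputable def kernelWeight (d : ℕ) (B : Matrix (Fin d) (Fin d) ℝ) (f : Fin d → Fin d) : ℝ :=
  priorPi d (toMat d f) * ∏ i, B i (f i)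

theorem kernelWeight_pos {d : ℕ} (hd : 2 ≤ d) {B : Matrix (Fin d) (Fin d) ℝ} {f : Fin d → Fin d}
    (hB : ∀ i, 0 < B i (f i)) : 0 < kernelWeight d B f :=
  mul_pos (priorPi_toMat_pos hd f) (prod_pos fun i _ => hB i)

theorem kernelK_eq_sum_kernelWeight (d : ℕ) (B A : Matrix (Fin d) (Fin d) ℝ) :
    kernelK d B A = ∑ f, kernelWeight d B f * ∏ i, A i (f i) := by
  have hrow (f : Fin d → Fin d) (i : Fin d) :
      (∏ j, if toMat d f i j = 1 then B i j * A i j else 1) = B i (f i) * A i (f i) := by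
    simp [toMat]
  classical
  rw [kernelK, PhiB, sum_image (toMat_injective d).injOn]
  simp only [hrow, prod_mul_distrib, kernelWeight, mul_assoc]

theorem kernelK_one (d : ℕ) (B : Matrix (Fin d) (Fin d) ℝ) :
    kernelK d B (fun _ _ => 1) = ∑ f, kernelWeight d B f :=
  (kernelK_eq_sum_kernelWeight d B _).trans <| by simp only [prod_const_one, mul_one]

theorem kernelK_one_sub_single (d : ℕ) (B : Matrix (Fin d) (Fin d) ℝ) (i j : Fin d) :
    kernelK d B (fun u v => if u = i ∧ v = j then 0 else 1) =
      ∑ f with f i ≠ j, kernelWeight d B f := by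
  have hprod (f : Fin d → Fin d) :
      (∏ u, if u = i ∧ f u = j then (0 : ℝ) else 1) = if f i ≠ j then 1 else 0 := by
    rw [prod_eq_single i (fun u _ hu => if_neg fun h => hu h.1) (by simp)]
    simp
  refine (kernelK_eq_sum_kernelWeight d B _).trans ?_
  simp only [hprod, mul_ite, mul_one, mul_zero, sum_filter]

theorem mixMat_div_sum {d : ℕ} {w : (Fin d → Fin d) → ℝ} (hw : ∑ f, w f ≠ 0) (i j : Fin d) :
    mixMat d (fun f => w f / ∑ g, w g) i j = 1 - (∑ f with f i ≠ j, w f) / ∑ f, w f := by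
  have hmix : mixMat d (fun f => w f / ∑ g, w g) i j = (∑ f with f i = j, w f) / ∑ f, w f := by
    simp only [mixMat, toMat, mul_ite, mul_one, mul_zero, sum_filter, sum_div, ite_div, zero_div]
  rw [hmix, eq_sub_iff_add_eq, ← add_div, sum_filter_add_sum_filter_not, div_self hw]

theorem mixMat_div_sum_kernelWeight {d : ℕ} (hd : 2 ≤ d) {B : Matrix (Fin d) (Fin d) ℝ}
    (hB : ∀ i j, 0 < B i j) (i j : Fin d) :
    mixMat d (fun f => kernelWeight d B f / ∑ g, kernelWeight d B g) i j =
      1 - kernelK d B (fun u v => if u = i ∧ v = j then 0 else 1) /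
            kernelK d B (fun _ _ => 1) := by
  have hsum : 0 < ∑ f, kernelWeight d B f :=
    sum_pos (fun f _ => kernelWeight_pos hd fun u => hB u (f u)) ⟨id, mem_univ id⟩
  rw [kernelK_one_sub_single, kernelK_one, mixMat_div_sum hsum.ne']

theorem lossInner_toMat {d : ℕ} (f : Fin d → Fin d) (p ℓ : Fin d → ℝ) :
    lossInner (toMat d f) p ℓ = ∑ i, p i * ℓ (f i) := by
  simp [lossInner, toMat]

theorem exp_mul_sum_lossInner_toMat {ι : Type*} {d : ℕ} (c : ℝ) (s : Finset ι)
    (p ℓ : ι → Fin d → ℝ) (f : Fin d → Fin d) :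
    Real.exp (c * ∑ τ ∈ s, lossInner (toMat d f) (p τ) (ℓ τ)) =
      ∏ i, Real.exp (c * ∑ τ ∈ s, p τ i * ℓ τ (f i)) := by
  simp only [lossInner_toMat]
  rw [sum_comm, mul_sum, Real.exp_sum]

theorem stmt11_general {ι : Type*} {d : ℕ} (hd : 2 ≤ d) (η : ℝ) (s : Finset ι)
    (p ℓ : ι → Fin d → ℝ) (q : (Fin d → Fin d) → ℝ) (B : Matrix (Fin d) (Fin d) ℝ)
    (hq : ∀ f,
      q f =
        priorPi d (toMat d f) * Real.exp (-η * ∑ τ ∈ s, lossInner (toMat d f) (p τ) (ℓ τ)) /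
          ∑ g, priorPi d (toMat d g) *
            Real.exp (-η * ∑ τ ∈ s, lossInner (toMat d g) (p τ) (ℓ τ)))
    (hB : ∀ i j, B i j = Real.exp (-η * ∑ τ ∈ s, p τ i * ℓ τ j)) (i j : Fin d) :
    mixMat d q i j =
      1 - kernelK d B (fun u v => if u = i ∧ v = j then 0 else 1) /
            kernelK d B (fun _ _ => 1) := by
  have hweight : q = fun f => kernelWeight d B f / ∑ g, kernelWeight d B g := by
    funext f
    simp only [hq, exp_mul_sum_lossInner_toMat, ← hB, kernelWeight]
  have hBpos (u v : Fin d) : 0 < B u v := by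
    rw [hB]
    exact Real.exp_pos _
  rw [hweight, mixMat_div_sum_kernelWeight hd hBpos]

/-- Kernelized MWU with the special prior exactly simulates MWU over `Φ_b`:
with `q_t(φ) ∝ π(φ)·exp(−η Σ_{τ<t} ⟨φ, p_τ ℓ_τ^T⟩)` and `(B_t)_{ij} = exp(−η Σ_{τ<t} p_{τ,i} ℓ_{τ,j})`,
for every `t ∈ [T]` and all `i, j`,
`(E_{φ∼q_t}[φ])_{ij} = 1 − K(B_t, 1 1^T − e_i e_j^T) / K(B_t, 1 1^T)`. -/
theorem stmt11 (d T : ℕ) (hd : 2 ≤ d) (η : ℝ) (hη : 0 < η)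
    (p ℓ : ℕ → Fin d → ℝ)
    (hp : ∀ t ∈ Finset.Icc 1 T, InSimplex d (p t))
    (hℓ : ∀ t ∈ Finset.Icc 1 T, ∀ i, 0 ≤ ℓ t i ∧ ℓ t i ≤ 1)
    (q : ℕ → (Fin d → Fin d) → ℝ) (B : ℕ → Matrix (Fin d) (Fin d) ℝ)
    (hq : ∀ t ∈ Finset.Icc 1 T, ∀ f,
      q t f =
        priorPi d (toMat d f) *
            Real.exp (-η * ∑ τ ∈ Finset.Ico 1 t, lossInner (toMat d f) (p τ) (ℓ τ)) /
          ∑ g, priorPi d (toMat d g) *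
            Real.exp (-η * ∑ τ ∈ Finset.Ico 1 t, lossInner (toMat d g) (p τ) (ℓ τ)))
    (hB : ∀ t ∈ Finset.Icc 1 T, ∀ i j,
      B t i j = Real.exp (-η * ∑ τ ∈ Finset.Ico 1 t, p τ i * ℓ τ j)) :
    ∀ t ∈ Finset.Icc 1 T, ∀ i j,
      mixMat d (q t) i j =
        1 - kernelK d (B t) (fun u v => if u = i ∧ v = j then 0 else 1) /
              kernelK d (B t) (fun _ _ => 1) :=
  fun t ht => stmt11_general hd η (Ico 1 t) p ℓ (q t) (B t) (hq t ht) (hB t ht)
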